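/- For each r > 0 let u_r : Ω^Q → ℝ be the unique solution of the stationary discounted HJB system 0 = −r u_r(q) + H(q, u_r(q−1) − u_r(q), u_r(q+1) − u_r(q)), q ∈ Ω^Q. Then: (i) there exists a constant γ̂ ∈ ℝ such that lim_{r → 0⁺} r u_r(q) = γ̂ for every q ∈ Ω^Q; (ii) for every q ∈ Ω^Q the limit v̂(q) := lim_{r → 0⁺} (u_r(q) − u_r(0)) exists; and (iii) the pair (γ̂, v̂) solves the ergodic HJB equation 0 = −γ̂ + H(q, v̂(q−1) − v̂(q), v̂(q+1) − v̂(q)) for all q ∈ Ω^Q. -/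

import Mathlib

/-!
Write the discounted system as `F u = r • u`, where `F` is an operator on functions on the finite
inventory interval. `F` ignores additive constants, and it is monotone at contact points: if `v ≤ w`
with equality at `i`, then `F v i ≤ F w i`. Comparing `u` with constants at its maximum and minimum
bounds `r • u` by `‖F 0‖`; since a bound on the exponentials bounds the increments, the
oscillation of `u` is bounded uniformly in `r`. So `(r * u i₀, u - u i₀)` stays in a compact set as
`r → 0⁺`, and every cluster point `(γ, v)` satisfies `F v = γ`, `v i₀ = 0`. Comparing two such pairs
at a maximum of the difference of their potentials shows that the constants agree; as the
exponentials are strictly increasing, that maximum then propagates along the interval and the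
potentials agree as well. Hence there is only one cluster point and the whole family converges.
-/

open Filter

/-- The optimised Hamiltonian of the ergodic Avellaneda–Stoikov model. -/
noncomputable def Hopt (qlow qhigh : ℤ) (lp lm kp km phi : ℝ) (q : ℤ) (p1 p2 : ℝ) : ℝ :=
  (if qlow < q then (lp / kp) * Real.exp (kp * p1 - 1) else 0)
    + (if q < qhigh then (lm / km) * Real.exp (km * p2 - 1) else 0)
    - phi * (q : ℝ) ^ 2

/-- `w` solves the stationary discounted HJB system with discount factor `r`. -/
def IsStatSol (qlow qhigh : ℤ) (lp lm kp km phi : ℝ) (r : ℝ) (w : ℤ → ℝ) : Prop :=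
  ∀ q ∈ Finset.Icc qlow qhigh,
    0 = -r * w q + Hopt qlow qhigh lp lm kp km phi q (w (q - 1) - w q) (w (q + 1) - w q)

open scoped Topology

section UniqueCluster

variable {X Y α : Type*} [TopologicalSpace X] [TopologicalSpace Y] [T2Space Y]
  {l : Filter α} {f : α → X} {G : X → Y} {c : Y}

lemma eq_of_mapClusterPt_of_tendsto_comp {x : X} (hx : MapClusterPt x l f)
    (hG : ContinuousAt G x) (hlim : Tendsto (G ∘ f) l (𝓝 c)) : G x = c := by
  have hcluster : MapClusterPt (G x) l (G ∘ f) := hx.continuousAt_comp hG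
  exact eq_of_nhds_neBot (ClusterPt.mono hcluster hlim)

lemma exists_tendsto_of_isCompact_of_subsingleton_fiber [l.NeBot] {K : Set X} (hK : IsCompact K)
    (hf : ∀ᶠ a in l, f a ∈ K) (hG : Continuous G) (hlim : Tendsto (G ∘ f) l (𝓝 c))
    (hfiber : (G ⁻¹' {c}).Subsingleton) : ∃ x, G x = c ∧ Tendsto f l (𝓝 x) := by
  have hcluster {y : X} (hy : MapClusterPt y l f) : G y = c :=
    eq_of_mapClusterPt_of_tendsto_comp hy hG.continuousAt hlim
  obtain ⟨x, -, hx⟩ := hK.exists_mapClusterPt_of_frequently hf.frequently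
  exact ⟨x, hcluster hx, hK.tendsto_nhds_of_unique_mapClusterPt hf
    fun y _ hy => hfiber (hcluster hy) (hcluster hx)⟩

end UniqueCluster

lemma exists_le_add_const_and_apply_eq {ι : Type*} [Finite ι] [Nonempty ι] (v w : ι → ℝ) :
    ∃ c i, v ≤ w + Function.const ι c ∧ v i = (w + Function.const ι c) i := by
  obtain ⟨i, hi⟩ := Finite.exists_max (v - w)
  refine ⟨v i - w i, i, fun j => ?_, by simp⟩
  have hij : v j - w j ≤ v i - w i := hi j
  simp only [Pi.add_apply, Function.const_apply]
  linarith

/-- An abstract Hamiltonian `F` on real functions on `ι`, with the properties that make the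
vanishing-discount limit of `F u = r • u` exist: besides continuity and invariance under constants,
`le_of_contact` is degenerate ellipticity, `eq_of_contact` the strong maximum principle, and
`coercive` turns an upper bound on `F v` into one on the oscillation of `v`. -/
structure IsErgodicOperator {ι : Type*} (F : (ι → ℝ) → ι → ℝ) : Prop where
  continuous : Continuous F
  map_add_const : ∀ (v : ι → ℝ) (c : ℝ), F (v + Function.const ι c) = F v
  le_of_contact : ∀ {v w : ι → ℝ} {i : ι}, v ≤ w → v i = w i → F v i ≤ F w i
  eq_of_contact : ∀ {v w : ι → ℝ} {i : ι}, v ≤ w → v i = w i → F w ≤ F v → v = w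
  coercive : ∀ C : ℝ, ∃ D : ℝ, ∀ v : ι → ℝ, (∀ i, F v i ≤ C) → ∀ i j, |v i - v j| ≤ D

namespace IsErgodicOperator

variable {ι : Type*} {F : (ι → ℝ) → ι → ℝ}

section Finite

variable [Finite ι]

lemma ergodicConstant_le [Nonempty ι] (hF : IsErgodicOperator F) {v w : ι → ℝ} {γ δ : ℝ}
    (hv : F v = Function.const ι γ) (hw : F w = Function.const ι δ) : γ ≤ δ := by
  obtain ⟨c, i, hle, hcontact⟩ := exists_le_add_const_and_apply_eq v w
  simpa [hF.map_add_const, hv, hw] using hF.le_of_contact hle hcontact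

lemma eq_of_eq_const (hF : IsErgodicOperator F) {v w : ι → ℝ} {γ δ : ℝ} {i₀ : ι}
    (hv : F v = Function.const ι γ) (hw : F w = Function.const ι δ) (h₀ : v i₀ = w i₀) :
    γ = δ ∧ v = w := by
  have : Nonempty ι := ⟨i₀⟩
  have hγ : γ = δ := (hF.ergodicConstant_le hv hw).antisymm (hF.ergodicConstant_le hw hv)
  obtain ⟨c, i, hle, hcontact⟩ := exists_le_add_const_and_apply_eq v w
  have hvw : v = w + Function.const ι c :=
    hF.eq_of_contact hle hcontact (by rw [hF.map_add_const, hv, hw, hγ])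
  have hc : c = 0 := by simpa [h₀] using congr_fun hvw i₀
  exact ⟨hγ, by simpa [hc] using hvw⟩

lemma exists_forall_mul_le [Nonempty ι] (hF : IsErgodicOperator F) {u : ι → ℝ} {r : ℝ}
    (hr : 0 < r) (hu : F u = r • u) : ∃ i, ∀ j, r * u j ≤ F 0 i := by
  obtain ⟨i, hi⟩ := Finite.exists_max u
  refine ⟨i, fun j => ?_⟩
  calc r * u j ≤ r * u i := by gcongr; exact hi j
    _ = F u i := by simp [hu]
    _ ≤ F (0 + Function.const ι (u i)) i :=
        hF.le_of_contact (fun k => by simpa using hi k) (by simp)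
    _ = F 0 i := by rw [hF.map_add_const]

lemma exists_forall_le_mul [Nonempty ι] (hF : IsErgodicOperator F) {u : ι → ℝ} {r : ℝ}
    (hr : 0 < r) (hu : F u = r • u) : ∃ i, ∀ j, F 0 i ≤ r * u j := by
  obtain ⟨i, hi⟩ := Finite.exists_min u
  refine ⟨i, fun j => ?_⟩
  calc F 0 i = F (0 + Function.const ι (u i)) i := by rw [hF.map_add_const]
    _ ≤ F u i := hF.le_of_contact (fun k => by simpa using hi k) (by simp)
    _ = r * u i := by simp [hu]
    _ ≤ r * u j := by gcongr; exact hi j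

end Finite

section Fintype

variable [Fintype ι]

lemma norm_smul_le [Nonempty ι] (hF : IsErgodicOperator F) {u : ι → ℝ} {r : ℝ}
    (hr : 0 < r) (hu : F u = r • u) : ‖r • u‖ ≤ ‖F 0‖ := by
  obtain ⟨i, hi⟩ := hF.exists_forall_mul_le hr hu
  obtain ⟨k, hk⟩ := hF.exists_forall_le_mul hr hu
  refine (pi_norm_le_iff_of_nonempty _).2 fun j => abs_le.2 ⟨?_, ?_⟩
  · exact (neg_le_of_abs_le (norm_le_pi_norm (F 0) k)).trans (hk j)
  · exact (hi j).trans (le_of_abs_le (norm_le_pi_norm (F 0) i))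

lemma exists_forall_norm_sub_const_le (hF : IsErgodicOperator F) (i₀ : ι) :
    ∃ D : ℝ, ∀ r > (0 : ℝ), ∀ u, F u = r • u → ‖u - Function.const ι (u i₀)‖ ≤ D := by
  have : Nonempty ι := ⟨i₀⟩
  obtain ⟨D, hD⟩ := hF.coercive ‖F 0‖
  refine ⟨D, fun r hr u hu => (pi_norm_le_iff_of_nonempty _).2 fun i => hD u (fun j => ?_) i i₀⟩
  calc F u j ≤ ‖F u‖ := (le_abs_self _).trans (norm_le_pi_norm (F u) j)
    _ = ‖r • u‖ := by rw [hu]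
    _ ≤ ‖F 0‖ := hF.norm_smul_le hr hu

end Fintype

end IsErgodicOperator

/-- The discounted value and the potential of `u`, the latter normalised to vanish at `i₀`. -/
def normalizedPair {ι : Type*} (i₀ : ι) (r : ℝ) (u : ι → ℝ) : ℝ × (ι → ℝ) :=
  (r * u i₀, u - Function.const ι (u i₀))

/-- The defect of `(γ, v)` in the ergodic equation `F v = γ` together with the normalisation
`v i₀ = 0`. -/
def ergodicResidual {ι : Type*} (F : (ι → ℝ) → ι → ℝ) (i₀ : ι) (p : ℝ × (ι → ℝ)) : (ι → ℝ) × ℝ :=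
  (F p.2 - Function.const ι p.1, p.2 i₀)

lemma ergodicResidual_eq_zero_iff {ι : Type*} {F : (ι → ℝ) → ι → ℝ} {i₀ : ι} {p : ℝ × (ι → ℝ)} :
    ergodicResidual F i₀ p = 0 ↔ F p.2 = Function.const ι p.1 ∧ p.2 i₀ = 0 := by
  rw [ergodicResidual, Prod.mk_eq_zero, sub_eq_zero]

namespace IsErgodicOperator

variable {ι : Type*} {F : (ι → ℝ) → ι → ℝ}

lemma continuous_ergodicResidual (hF : IsErgodicOperator F) (i₀ : ι) :
    Continuous (ergodicResidual F i₀) :=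
  ((hF.continuous.comp continuous_snd).sub (by fun_prop)).prodMk (by fun_prop)

lemma ergodicResidual_normalizedPair (hF : IsErgodicOperator F) (i₀ : ι) {r : ℝ} {u : ι → ℝ}
    (hu : F u = r • u) :
    ergodicResidual F i₀ (normalizedPair i₀ r u) = (r • (u - Function.const ι (u i₀)), 0) := by
  have hshift : F (u - Function.const ι (u i₀)) = r • u := by
    rw [← hu, ← hF.map_add_const _ (u i₀), sub_add_cancel]
  ext i <;> simp [ergodicResidual, normalizedPair, hshift, mul_sub]

variable [Finite ι]

lemma subsingleton_ergodicResidual_fiber (hF : IsErgodicOperator F) (i₀ : ι) :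
    (ergodicResidual F i₀ ⁻¹' {0}).Subsingleton := by
  intro p hp q hq
  obtain ⟨hp, hp₀⟩ := ergodicResidual_eq_zero_iff.1 hp
  obtain ⟨hq, hq₀⟩ := ergodicResidual_eq_zero_iff.1 hq
  exact Prod.ext_iff.2 (hF.eq_of_eq_const hp hq (hp₀.trans hq₀.symm))

lemma exists_isCompact_normalizedPair_mem (hF : IsErgodicOperator F) (i₀ : ι) :
    ∃ K, IsCompact K ∧ ∀ r > (0 : ℝ), ∀ u, F u = r • u → normalizedPair i₀ r u ∈ K := by
  have := Fintype.ofFinite ι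
  have : Nonempty ι := ⟨i₀⟩
  obtain ⟨D, hD⟩ := hF.exists_forall_norm_sub_const_le i₀
  refine ⟨Metric.closedBall 0 ‖F 0‖ ×ˢ Metric.closedBall 0 D,
    (isCompact_closedBall _ _).prod (isCompact_closedBall _ _), fun r hr u hu => ⟨?_, ?_⟩⟩
  · exact mem_closedBall_zero_iff.2
      ((norm_le_pi_norm (r • u) i₀).trans (hF.norm_smul_le hr hu))
  · exact mem_closedBall_zero_iff.2 (hD r hr u hu)

lemma tendsto_ergodicResidual_normalizedPair (hF : IsErgodicOperator F) (i₀ : ι) {u : ℝ → ι → ℝ}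
    (hu : ∀ r > 0, F (u r) = r • u r) :
    Tendsto (fun r => ergodicResidual F i₀ (normalizedPair i₀ r (u r))) (𝓝[>] 0) (𝓝 0) := by
  have := Fintype.ofFinite ι
  obtain ⟨D, hD⟩ := hF.exists_forall_norm_sub_const_le i₀
  have hpos : ∀ᶠ r : ℝ in 𝓝[>] 0, 0 < r := self_mem_nhdsWithin
  have hsmul : Tendsto (fun r => r • (u r - Function.const ι (u r i₀))) (𝓝[>] 0) (𝓝 0) :=
    (tendsto_id.mono_left nhdsWithin_le_nhds).zero_smul_isBoundedUnder_le
      (isBoundedUnder_of_eventually_le (hpos.mono fun r hr => hD r hr _ (hu r hr)))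
  refine (hsmul.prodMk_nhds tendsto_const_nhds).congr' ?_
  exact hpos.mono fun r hr => (hF.ergodicResidual_normalizedPair i₀ (hu r hr)).symm

lemma exists_tendsto_normalizedPair (hF : IsErgodicOperator F) (i₀ : ι) {u : ℝ → ι → ℝ}
    (hu : ∀ r > 0, F (u r) = r • u r) :
    ∃ (γ : ℝ) (v : ι → ℝ), F v = Function.const ι γ ∧
      Tendsto (fun r => normalizedPair i₀ r (u r)) (𝓝[>] 0) (𝓝 (γ, v)) := by
  obtain ⟨K, hK, hmem⟩ := hF.exists_isCompact_normalizedPair_mem i₀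
  have hmem_K : ∀ᶠ r in 𝓝[>] 0, normalizedPair i₀ r (u r) ∈ K :=
    eventually_mem_nhdsWithin.mono fun r hr => hmem r hr _ (hu r hr)
  obtain ⟨⟨γ, v⟩, hroot, hlim⟩ := exists_tendsto_of_isCompact_of_subsingleton_fiber hK hmem_K
    (hF.continuous_ergodicResidual i₀) (hF.tendsto_ergodicResidual_normalizedPair i₀ hu)
    (hF.subsingleton_ergodicResidual_fiber i₀)
  exact ⟨γ, v, (ergodicResidual_eq_zero_iff.1 hroot).1, hlim⟩

theorem exists_tendsto_vanishing_discount (hF : IsErgodicOperator F) (i₀ : ι) {u : ℝ → ι → ℝ}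
    (hu : ∀ r > 0, F (u r) = r • u r) :
    ∃ (γ : ℝ) (v : ι → ℝ), F v = Function.const ι γ ∧
      (∀ i, Tendsto (fun r => r * u r i) (𝓝[>] 0) (𝓝 γ)) ∧
      ∀ i, Tendsto (fun r => u r i - u r i₀) (𝓝[>] 0) (𝓝 (v i)) := by
  obtain ⟨γ, v, hv, hlim⟩ := hF.exists_tendsto_normalizedPair i₀ hu
  have hdiff (i : ι) : Tendsto (fun r => u r i - u r i₀) (𝓝[>] 0) (𝓝 (v i)) :=
    tendsto_pi_nhds.1 hlim.snd_nhds i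
  have hr : Tendsto (fun r : ℝ => r) (𝓝[>] 0) (𝓝 0) := tendsto_id.mono_left nhdsWithin_le_nhds
  refine ⟨γ, v, hv, fun i => ?_, hdiff⟩
  have hsum := hlim.fst_nhds.add (hr.mul (hdiff i))
  rw [zero_mul, add_zero] at hsum
  exact hsum.congr fun r => by simp only [normalizedPair]; ring

end IsErgodicOperator

section IntInterval

variable {a b : ℤ}

lemma coe_succ_of_lt_right {q : Set.Icc a b} (hq : (q : ℤ) < b) :
    ((Order.succ q : Set.Icc a b) : ℤ) = q + 1 :=
  coe_succ_of_mem ⟨q.2.1.trans (Order.le_succ _), Order.succ_le_of_lt hq⟩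

lemma coe_pred_of_left_lt {q : Set.Icc a b} (hq : a < (q : ℤ)) :
    ((Order.pred q : Set.Icc a b) : ℤ) = q - 1 :=
  coe_pred_of_mem ⟨Order.le_pred_of_lt hq, (Order.pred_le _).trans q.2.2⟩

lemma isMax_iff_right_le {q : Set.Icc a b} : IsMax q ↔ b ≤ (q : ℤ) :=
  ⟨fun h => h (b := ⟨b, q.2.1.trans q.2.2, le_rfl⟩) q.2.2, fun h x _ => x.2.2.trans h⟩

lemma isMin_iff_le_left {q : Set.Icc a b} : IsMin q ↔ (q : ℤ) ≤ a :=
  ⟨fun h => h (b := ⟨a, le_rfl, q.2.1.trans q.2.2⟩) q.2.1, fun h x _ => h.trans x.2.1⟩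

lemma forall_of_forall_succ_of_forall_pred {ι : Type*} [LinearOrder ι] [SuccOrder ι] [PredOrder ι]
    [IsSuccArchimedean ι] [IsPredArchimedean ι] {P : ι → Prop} {i : ι} (hi : P i)
    (hsucc : ∀ j, P j → P (Order.succ j)) (hpred : ∀ j, P j → P (Order.pred j)) (j : ι) : P j :=
  (le_total i j).elim (fun hij => Succ.rec (P := fun k _ => P k) hi (fun k _ => hsucc k) hij)
    (fun hji => Pred.rec (P := fun k _ => P k) hi (fun k _ => hpred k) hji)

lemma monotone_mul_coe_add_of_sub_succ_le {v : Set.Icc a b → ℝ} {D : ℝ}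
    (hv : ∀ q : Set.Icc a b, (q : ℤ) < b → v q - v (Order.succ q) ≤ D) :
    Monotone fun q : Set.Icc a b => D * ((q : ℤ) : ℝ) + v q := by
  refine monotone_of_le_succ fun q hq => ?_
  have hqb : (q : ℤ) < b := not_le.1 (mt isMax_iff_right_le.2 hq)
  rw [coe_succ_of_lt_right hqb, Int.cast_add, Int.cast_one]
  linarith [hv q hqb]

lemma abs_sub_le_mul_of_increments_le {v : Set.Icc a b → ℝ} {D : ℝ}
    (hpred : ∀ q : Set.Icc a b, a < (q : ℤ) → v (Order.pred q) - v q ≤ D)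
    (hsucc : ∀ q : Set.Icc a b, (q : ℤ) < b → v (Order.succ q) - v q ≤ D) (i j : Set.Icc a b) :
    |v i - v j| ≤ D * |((i : ℤ) : ℝ) - ((j : ℤ) : ℝ)| := by
  have hdown (q : Set.Icc a b) (hq : (q : ℤ) < b) : v q - v (Order.succ q) ≤ D := by
    have hq_not_max : ¬IsMax q := mt isMax_iff_right_le.1 hq.not_ge
    have hleft : a < ((Order.succ q : Set.Icc a b) : ℤ) :=
      q.2.1.trans_lt (Order.lt_succ_of_not_isMax hq_not_max)
    simpa only [Order.pred_succ_of_not_isMax hq_not_max] using hpred (Order.succ q) hleft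
  have hmono_add : Monotone fun q : Set.Icc a b => D * ((q : ℤ) : ℝ) + v q :=
    monotone_mul_coe_add_of_sub_succ_le hdown
  have hmono_sub : Monotone fun q : Set.Icc a b => D * ((q : ℤ) : ℝ) + -v q :=
    monotone_mul_coe_add_of_sub_succ_le fun q hq => by linarith [hsucc q hq]
  wlog hij : i ≤ j generalizing i j
  · simpa only [abs_sub_comm] using this j i (le_of_not_ge hij)
  have hij' : ((i : ℤ) : ℝ) ≤ ((j : ℤ) : ℝ) := by exact_mod_cast hij
  rw [abs_of_nonpos (sub_nonpos.2 hij'), abs_le]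
  constructor <;> linarith [hmono_add hij, hmono_sub hij]

end IntInterval

/-- The contribution of one side of the market to `Hopt`, with fill rate `l`, decay `k`, increment
`p`; `active` says that the inventory constraint allows a fill on this side. -/
noncomputable def sideGain (active : Prop) [Decidable active] (l k p : ℝ) : ℝ :=
  if active then l / k * Real.exp (k * p - 1) else 0

section SideGain

variable {active : Prop} [Decidable active] {l k p p' : ℝ}

lemma sideGain_nonneg (hl : 0 ≤ l) (hk : 0 ≤ k) : 0 ≤ sideGain active l k p := by
  unfold sideGain
  split_ifs <;> positivity

lemma sideGain_le_sideGain_iff (hl : 0 < l) (hk : 0 < k) :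
    sideGain active l k p ≤ sideGain active l k p' ↔ (active → p ≤ p') := by
  unfold sideGain
  split_ifs with h
  · simp [h, mul_le_mul_iff_right₀, hl, hk]
  · simp [h]

lemma le_div_of_sideGain_le (hl : 0 < l) (hk : 0 < k) {C : ℝ} (h : active)
    (hC : sideGain active l k p ≤ C) : p ≤ C / l := by
  rw [sideGain, if_pos h] at hC
  rw [le_div_iff₀ hl]
  calc p * l = l / k * (k * p - 1 + 1) := by field_simp; ring
    _ ≤ l / k * Real.exp (k * p - 1) := by gcongr; exact Real.add_one_le_exp _
    _ ≤ C := hC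

end SideGain

section Hamiltonian

variable {qlow qhigh : ℤ} {lp lm kp km phi : ℝ}

lemma Hopt_eq_sideGain {q : ℤ} {p₁ p₂ : ℝ} : Hopt qlow qhigh lp lm kp km phi q p₁ p₂ =
    sideGain (qlow < q) lp kp p₁ + sideGain (q < qhigh) lm km p₂ - phi * (q : ℝ) ^ 2 :=
  rfl

lemma Hopt_congr {q : ℤ} {p₁ p₂ p₁' p₂' : ℝ} (h₁ : qlow < q → p₁ = p₁')
    (h₂ : q < qhigh → p₂ = p₂') :
    Hopt qlow qhigh lp lm kp km phi q p₁ p₂ = Hopt qlow qhigh lp lm kp km phi q p₁' p₂' := by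
  unfold Hopt
  congr 2
  · exact if_ctx_congr Iff.rfl (fun h => by rw [h₁ h]) fun _ => rfl
  · exact if_ctx_congr Iff.rfl (fun h => by rw [h₂ h]) fun _ => rfl

lemma Hopt_le_Hopt (hlp : 0 < lp) (hlm : 0 < lm) (hkp : 0 < kp) (hkm : 0 < km)
    {q : ℤ} {p₁ p₂ p₁' p₂' : ℝ} (h₁ : qlow < q → p₁ ≤ p₁') (h₂ : q < qhigh → p₂ ≤ p₂') :
    Hopt qlow qhigh lp lm kp km phi q p₁ p₂ ≤ Hopt qlow qhigh lp lm kp km phi q p₁' p₂' := by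
  simp only [Hopt_eq_sideGain]
  gcongr ?_ + ?_ - _
  · exact (sideGain_le_sideGain_iff hlp hkp).2 h₁
  · exact (sideGain_le_sideGain_iff hlm hkm).2 h₂

lemma le_of_Hopt_le_Hopt (hlp : 0 < lp) (hlm : 0 < lm) (hkp : 0 < kp) (hkm : 0 < km)
    {q : ℤ} {p₁ p₂ p₁' p₂' : ℝ} (h₁ : qlow < q → p₁ ≤ p₁') (h₂ : q < qhigh → p₂ ≤ p₂')
    (h : Hopt qlow qhigh lp lm kp km phi q p₁' p₂' ≤ Hopt qlow qhigh lp lm kp km phi q p₁ p₂) :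
    (qlow < q → p₁' ≤ p₁) ∧ (q < qhigh → p₂' ≤ p₂) := by
  have hgain₁ := (sideGain_le_sideGain_iff hlp hkp).2 h₁
  have hgain₂ := (sideGain_le_sideGain_iff hlm hkm).2 h₂
  simp only [Hopt_eq_sideGain] at h
  constructor
  · exact (sideGain_le_sideGain_iff hlp hkp).1 (by linarith)
  · exact (sideGain_le_sideGain_iff hlm hkm).1 (by linarith)

lemma le_div_of_Hopt_le (hlp : 0 < lp) (hlm : 0 < lm) (hkp : 0 < kp) (hkm : 0 < km)
    {q : ℤ} {p₁ p₂ C : ℝ} (h : Hopt qlow qhigh lp lm kp km phi q p₁ p₂ ≤ C) :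
    (qlow < q → p₁ ≤ (C + phi * (q : ℝ) ^ 2) / lp) ∧
      (q < qhigh → p₂ ≤ (C + phi * (q : ℝ) ^ 2) / lm) := by
  have hgain₁ : 0 ≤ sideGain (qlow < q) lp kp p₁ := sideGain_nonneg hlp.le hkp.le
  have hgain₂ : 0 ≤ sideGain (q < qhigh) lm km p₂ := sideGain_nonneg hlm.le hkm.le
  rw [Hopt_eq_sideGain] at h
  exact ⟨fun hq => le_div_of_sideGain_le hlp hkp hq (by linarith),
    fun hq => le_div_of_sideGain_le hlm hkm hq (by linarith)⟩

end Hamiltonian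

/-- The Hamiltonian as an operator on functions on the inventory interval. At the endpoints
`Order.pred` and `Order.succ` return the point itself; `Hopt` ignores the resulting increment. -/
noncomputable def hoptOperator (qlow qhigh : ℤ) (lp lm kp km phi : ℝ)
    (v : Set.Icc qlow qhigh → ℝ) (q : Set.Icc qlow qhigh) : ℝ :=
  Hopt qlow qhigh lp lm kp km phi q (v (Order.pred q) - v q) (v (Order.succ q) - v q)

section HoptOperator

variable {qlow qhigh : ℤ} {lp lm kp km phi : ℝ}

lemma hoptOperator_comp_coe (w : ℤ → ℝ) (q : Set.Icc qlow qhigh) :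
    hoptOperator qlow qhigh lp lm kp km phi (w ∘ (↑)) q =
      Hopt qlow qhigh lp lm kp km phi q (w (q - 1) - w q) (w (q + 1) - w q) := by
  refine Hopt_congr (fun hq => ?_) fun hq => ?_
  · simp only [Function.comp_apply, coe_pred_of_left_lt hq]
  · simp only [Function.comp_apply, coe_succ_of_lt_right hq]

lemma IsStatSol.hoptOperator_eq_smul {r : ℝ} {w : ℤ → ℝ}
    (hw : IsStatSol qlow qhigh lp lm kp km phi r w) :
    hoptOperator qlow qhigh lp lm kp km phi (w ∘ (↑)) = r • (w ∘ (↑)) := by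
  ext q
  have hq := hw q (Finset.mem_Icc.2 q.2)
  rw [hoptOperator_comp_coe, Pi.smul_apply, Function.comp_apply, smul_eq_mul]
  linarith

lemma continuous_hoptOperator : Continuous (hoptOperator qlow qhigh lp lm kp km phi) := by
  refine continuous_pi fun q => ?_
  unfold hoptOperator Hopt
  split_ifs <;> fun_prop

lemma hoptOperator_eq_of_contact (hlp : 0 < lp) (hlm : 0 < lm) (hkp : 0 < kp) (hkm : 0 < km)
    {v w : Set.Icc qlow qhigh → ℝ} {q : Set.Icc qlow qhigh} (hle : v ≤ w) (hq : v q = w q)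
    (hop : hoptOperator qlow qhigh lp lm kp km phi w ≤
      hoptOperator qlow qhigh lp lm kp km phi v) : v = w := by
  have hneighbours (x : Set.Icc qlow qhigh) (hx : v x = w x) :=
    le_of_Hopt_le_Hopt hlp hlm hkp hkm (fun _ => sub_le_sub (hle _) hx.ge)
      (fun _ => sub_le_sub (hle _) hx.ge) (hop x)
  refine funext (forall_of_forall_succ_of_forall_pred hq (fun x hx => ?_) fun x hx => ?_)
  · by_cases hlt : (x : ℤ) < qhigh
    · exact (hle _).antisymm (by linarith [(hneighbours x hx).2 hlt])
    · rwa [(isMax_iff_right_le.2 (not_lt.1 hlt)).succ_eq]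
  · by_cases hlt : qlow < (x : ℤ)
    · exact (hle _).antisymm (by linarith [(hneighbours x hx).1 hlt])
    · rwa [(isMin_iff_le_left.2 (not_lt.1 hlt)).pred_eq]

lemma hoptOperator_coercive (hlp : 0 < lp) (hlm : 0 < lm) (hkp : 0 < kp) (hkm : 0 < km) (C : ℝ) :
    ∃ D, ∀ v, (∀ q, hoptOperator qlow qhigh lp lm kp km phi v q ≤ C) →
      ∀ i j, |v i - v j| ≤ D := by
  obtain ⟨M, hM⟩ := Finite.exists_le fun q : Set.Icc qlow qhigh => C + phi * ((q : ℤ) : ℝ) ^ 2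
  let increment : ℝ := max (M / lp) (M / lm)
  obtain ⟨D, hD⟩ := Finite.exists_le fun p : Set.Icc qlow qhigh × Set.Icc qlow qhigh =>
    increment * |((p.1 : ℤ) : ℝ) - ((p.2 : ℤ) : ℝ)|
  refine ⟨D, fun v hv i j => (abs_sub_le_mul_of_increments_le (fun q hq => ?_)
    (fun q hq => ?_) i j).trans (hD (i, j))⟩
  · calc v (Order.pred q) - v q
      _ ≤ (C + phi * ((q : ℤ) : ℝ) ^ 2) / lp := (le_div_of_Hopt_le hlp hlm hkp hkm (hv q)).1 hq
      _ ≤ M / lp := by gcongr; exact hM q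
      _ ≤ increment := le_max_left _ _
  · calc v (Order.succ q) - v q
      _ ≤ (C + phi * ((q : ℤ) : ℝ) ^ 2) / lm := (le_div_of_Hopt_le hlp hlm hkp hkm (hv q)).2 hq
      _ ≤ M / lm := by gcongr; exact hM q
      _ ≤ increment := le_max_right _ _

lemma isErgodicOperator_hoptOperator (hlp : 0 < lp) (hlm : 0 < lm) (hkp : 0 < kp)
    (hkm : 0 < km) : IsErgodicOperator (hoptOperator qlow qhigh lp lm kp km phi) where
  continuous := continuous_hoptOperator
  map_add_const v c := by ext q; simp [hoptOperator]
  le_of_contact hle hq := Hopt_le_Hopt hlp hlm hkp hkm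
    (fun _ => sub_le_sub (hle _) hq.ge) fun _ => sub_le_sub (hle _) hq.ge
  eq_of_contact := hoptOperator_eq_of_contact hlp hlm hkp hkm
  coercive := hoptOperator_coercive hlp hlm hkp hkm

end HoptOperator

theorem stmt4_general {qlow qhigh q₀ : ℤ} (hq₀ : q₀ ∈ Finset.Icc qlow qhigh)
    {lp lm kp km : ℝ} (hlp : 0 < lp) (hlm : 0 < lm) (hkp : 0 < kp) (hkm : 0 < km) (phi : ℝ)
    {u : ℝ → ℤ → ℝ} (hu : ∀ r : ℝ, 0 < r → IsStatSol qlow qhigh lp lm kp km phi r (u r)) :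
    ∃ gam : ℝ, ∃ vhat : ℤ → ℝ,
      (∀ q ∈ Finset.Icc qlow qhigh, Tendsto (fun r => r * u r q) (𝓝[>] 0) (𝓝 gam)) ∧
      (∀ q ∈ Finset.Icc qlow qhigh,
        Tendsto (fun r => u r q - u r q₀) (𝓝[>] 0) (𝓝 (vhat q))) ∧
      (∀ q ∈ Finset.Icc qlow qhigh,
        0 = -gam + Hopt qlow qhigh lp lm kp km phi q
              (vhat (q - 1) - vhat q) (vhat (q + 1) - vhat q)) := by
  obtain ⟨gam, v, hv, hgam, hlim⟩ :=
    (isErgodicOperator_hoptOperator hlp hlm hkp hkm).exists_tendsto_vanishing_discount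
      (⟨q₀, Finset.mem_Icc.1 hq₀⟩ : Set.Icc qlow qhigh) (u := fun r => u r ∘ (↑))
      fun r hr => (hu r hr).hoptOperator_eq_smul
  obtain ⟨vhat, rfl⟩ : ∃ vhat : ℤ → ℝ, vhat ∘ (↑) = v :=
    ⟨Function.extend (↑) v 0, Function.extend_comp Subtype.val_injective v 0⟩
  refine ⟨gam, vhat, fun q hq => hgam ⟨q, Finset.mem_Icc.1 hq⟩,
    fun q hq => hlim ⟨q, Finset.mem_Icc.1 hq⟩, fun q hq => ?_⟩
  have hergodic := congr_fun hv ⟨q, Finset.mem_Icc.1 hq⟩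
  rw [hoptOperator_comp_coe, Function.const_apply] at hergodic
  exact (neg_add_eq_zero.2 hergodic.symm).symm

theorem stmt4 (qlow qhigh : ℤ) (hlow : qlow < 0) (hhigh : 0 < qhigh)
    (lp lm kp km phi : ℝ) (hlp : 0 < lp) (hlm : 0 < lm) (hkp : 0 < kp) (hkm : 0 < km)
    (hphi : 0 ≤ phi)
    -- for each r > 0, `u r` is the unique solution of the stationary discounted HJB
    (u : ℝ → ℤ → ℝ)
    (hu : ∀ r : ℝ, 0 < r → IsStatSol qlow qhigh lp lm kp km phi r (u r)) :
    ∃ gam : ℝ, ∃ vhat : ℤ → ℝ,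
      -- (i) lim_{r → 0⁺} r u_r(q) = γ̂ for every q
      (∀ q ∈ Finset.Icc qlow qhigh,
        Tendsto (fun r : ℝ => r * u r q) (nhdsWithin 0 (Set.Ioi 0)) (nhds gam)) ∧
      -- (ii) v̂(q) := lim_{r → 0⁺} (u_r(q) − u_r(0)) exists
      (∀ q ∈ Finset.Icc qlow qhigh,
        Tendsto (fun r : ℝ => u r q - u r 0) (nhdsWithin 0 (Set.Ioi 0)) (nhds (vhat q))) ∧
      -- (iii) (γ̂, v̂) solves the ergodic HJB equation
      (∀ q ∈ Finset.Icc qlow qhigh,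
        0 = -gam + Hopt qlow qhigh lp lm kp km phi q
              (vhat (q - 1) - vhat q) (vhat (q + 1) - vhat q)) := by
  exact stmt4_general (Finset.mem_Icc.2 ⟨hlow.le, hhigh.le⟩) hlp hlm hkp hkm phi hu
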